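/- Let H be a real Hilbert space, let λ ∈ [0,∞), s ∈ {−1,1}, let J be a unitary operator on H, and let n ∈ H be a unit vector. Then for every w ∈ M(H) one has W_{λ,∞}[s,n,J]( W_{λ,∞}[s,Jn,J⁻¹] w ) = w; that is, the composition of the generalized Galilean transform W_{λ,∞}[s,n,J] with W_{λ,∞}[s,Jn,J⁻¹] is the identity operator on M(H). -/

import Mathlib

open scoped InnerProductSpace

/-- Generalized Lorentz transform `W_{λ,c}[s,n,J]` on `M(H) = ℝ × H` (case `λ < ∞`, `c < ∞`). -/
noncomputable def Wfin {H : Type*} [NormedAddCommGroup H] [InnerProductSpace ℝ H]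
    (lam c s : ℝ) (n : H) (J : H ≃ₗᵢ[ℝ] H) (w : ℝ × H) : ℝ × H :=
  ((s * w.1 - lam / c ^ 2 * ⟪n, w.2⟫_ℝ) / Real.sqrt |1 - lam ^ 2 / c ^ 2|,
    J (((lam * w.1 - s * ⟪n, w.2⟫_ℝ) / Real.sqrt |1 - lam ^ 2 / c ^ 2|) • n
      + (w.2 - ⟪n, w.2⟫_ℝ • n)))

/-- Generalized Lorentz transform `W_{λ,∞}[s,n,J]` on `M(H) = ℝ × H` (case `c = ∞`). -/
noncomputable def Wgal {H : Type*} [NormedAddCommGroup H] [InnerProductSpace ℝ H]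
    (lam s : ℝ) (n : H) (J : H ≃ₗᵢ[ℝ] H) (w : ℝ × H) : ℝ × H :=
  (s * w.1, J ((lam * w.1 - s * ⟪n, w.2⟫_ℝ) • n + (w.2 - ⟪n, w.2⟫_ℝ • n)))

/-- Generalized Lorentz transform `W_{∞,c}[s,n,J]` on `M(H) = ℝ × H` (case `λ = ∞`). -/
noncomputable def Wtach {H : Type*} [NormedAddCommGroup H] [InnerProductSpace ℝ H]
    (c s : ℝ) (n : H) (J : H ≃ₗᵢ[ℝ] H) (w : ℝ × H) : ℝ × H :=
  (-⟪n, w.2⟫_ℝ / c, J ((c * w.1) • n + (w.2 - ⟪n, w.2⟫_ℝ • n)))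

/-!
The unitary factors cancel: `W[s,Jn,J⁻¹]` first undoes `J` and then applies `W[s,n,1]`, while
`W[s,n,J]` applies `W[s,n,1]` and then `J`, so the composition is the conjugate by `J` of the square
of `W[s,n,1]`. The map `W[s,n,1]` fixes the component orthogonal to `n`, and acts on the pair
`(t, ⟪n, x⟫)` by `(t, a) ↦ (s t, λ t - s a)`, which is an involution because `s² = 1`.
-/

section AxialCoord

variable {𝕜 E : Type*} [RCLike 𝕜] [NormedAddCommGroup E] [InnerProductSpace 𝕜 E]

/-- The vector obtained from `x` by replacing its coordinate `⟪n, x⟫` along `n` by `a` and keeping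
`x - ⟪n, x⟫ • n`; when `n` is a unit vector, the latter is the component of `x` orthogonal to `n`.
It expresses the spatial part of `Wgal` as a change of a single coordinate. -/
def replaceAxialCoord (n : E) (a : 𝕜) (x : E) : E :=
  a • n + (x - ⟪n, x⟫_𝕜 • n)

lemma replaceAxialCoord_inner_self (n x : E) : replaceAxialCoord n ⟪n, x⟫_𝕜 x = x :=
  add_sub_cancel _ _

lemma inner_replaceAxialCoord {n : E} (hn : ‖n‖ = 1) (a : 𝕜) (x : E) :
    ⟪n, replaceAxialCoord n a x⟫_𝕜 = a := by
  simp [replaceAxialCoord, inner_add_right, inner_sub_right, inner_smul_right, hn]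

lemma replaceAxialCoord_replaceAxialCoord {n : E} (hn : ‖n‖ = 1) (a b : 𝕜) (x : E) :
    replaceAxialCoord n a (replaceAxialCoord n b x) = replaceAxialCoord n a x := by
  rw [replaceAxialCoord, inner_replaceAxialCoord hn, replaceAxialCoord, add_sub_cancel_left,
    replaceAxialCoord]

end AxialCoord

section Galilean

variable {H : Type*} [NormedAddCommGroup H] [InnerProductSpace ℝ H]

lemma Wgal_eq_map_Wgal_refl (lam s : ℝ) (n : H) (J : H ≃ₗᵢ[ℝ] H) (w : ℝ × H) :
    Wgal lam s n J w = Prod.map id J (Wgal lam s n (.refl ℝ H) w) :=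
  rfl

lemma Wgal_map (lam s : ℝ) (n : H) (J K : H ≃ₗᵢ[ℝ] H) (w : ℝ × H) :
    Wgal lam s (K n) J (Prod.map id K w) = Wgal lam s n (K.trans J) w := by
  simp [Wgal]

lemma Wgal_refl_apply (lam s : ℝ) (n : H) (t : ℝ) (x : H) :
    Wgal lam s n (.refl ℝ H) (t, x) =
      (s * t, replaceAxialCoord n (lam * t - s * ⟪n, x⟫_ℝ) x) :=
  rfl

lemma Wgal_refl_involutive (lam : ℝ) {s : ℝ} (hs : s = 1 ∨ s = -1) {n : H} (hn : ‖n‖ = 1) :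
    Function.Involutive (Wgal lam s n (.refl ℝ H)) := by
  rintro ⟨t, x⟩
  have hss : s * s = 1 := mul_self_eq_one_iff.mpr hs
  have time_eq : s * (s * t) = t := by rw [← mul_assoc, hss, one_mul]
  have coord_eq : lam * (s * t) - s * (lam * t - s * ⟪n, x⟫_ℝ) = ⟪n, x⟫_ℝ := by
    linear_combination ⟪n, x⟫_ℝ * hss
  rw [Wgal_refl_apply, Wgal_refl_apply, inner_replaceAxialCoord hn, time_eq, coord_eq,
    replaceAxialCoord_replaceAxialCoord hn, replaceAxialCoord_inner_self]

theorem stmt0_general (lam : ℝ) {s : ℝ} (hs : s = 1 ∨ s = -1) (J : H ≃ₗᵢ[ℝ] H) {n : H}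
    (hn : ‖n‖ = 1) (w : ℝ × H) : Wgal lam s n J (Wgal lam s (J n) J.symm w) = w := by
  obtain ⟨v, rfl⟩ := (Function.surjective_id.prodMap J.surjective) w
  calc Wgal lam s n J (Wgal lam s (J n) J.symm (Prod.map id J v))
      = Wgal lam s n J (Wgal lam s n (.refl ℝ H) v) := by
        rw [Wgal_map, J.self_trans_symm]
    _ = Prod.map id J (Wgal lam s n (.refl ℝ H) (Wgal lam s n (.refl ℝ H) v)) :=
        Wgal_eq_map_Wgal_refl ..
    _ = Prod.map id J v := by rw [Wgal_refl_involutive lam hs hn v]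

end Galilean

/-- `W_{λ,∞}[s,n,J] ∘ W_{λ,∞}[s,Jn,J⁻¹] = id` on `M(H)`. -/
theorem stmt0 {H : Type*} [NormedAddCommGroup H] [InnerProductSpace ℝ H] [CompleteSpace H]
    (lam : ℝ) (hlam : 0 ≤ lam) (s : ℝ) (hs : s = 1 ∨ s = -1)
    (J : H ≃ₗᵢ[ℝ] H) (n : H) (hn : ‖n‖ = 1) :
    ∀ w : ℝ × H, Wgal lam s n J (Wgal lam s (J n) J.symm w) = w :=
  stmt0_general lam hs J hn
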